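/- (Decodability of Type II filling, Lemma 6) In the hybrid 2D MACC user-delivery array Q, Condition C3 holds among Type II entries: if two distinct Type II entries Q((j,f),(k_1,k_2)) and Q((j',f'),(k_1',k_2')) carry the same pair (s,e) with s ∈ [S_1'] and e ∈ [K_2]^{t+1}, then the crossing entries Q((j,f),(k_1',k_2')) and Q((j',f'),(k_1,k_2)) are stars. -/

import Mathlib

/-!
If two Type II entries sit in the same cell of the vertical array, their labels agree in every
block, so the entries coincide. Otherwise Condition C3 of the vertical array puts stars at the
crossing cells and forces the two columns to differ. Reading the common label at either of these
columns then shows a freshly inserted value on one side and a coordinate of the row index on the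
other, so each crossing entry is a tag-star.
-/

section TypeII

variable {R C S B V : Type*}

/-- Condition C3 of a placement delivery array with stars encoded as `none`: two distinct cells
carrying the same symbol have stars at their crossing cells. -/
def SatisfiesC3 (A : R → C → Option S) : Prop :=
  ∀ (j j' : R) (k k' : C) (s : S), A j k = some s → A j' k' = some s → (j, k) ≠ (j', k') →
    A j k' = none ∧ A j' k = none

theorem SatisfiesC3.column_ne {A : R → C → Option S} (hA : SatisfiesC3 A) {j j' : R} {k k' : C}
    {s : S} (h : A j k = some s) (h' : A j' k' = some s) (hne : (j, k) ≠ (j', k')) : k ≠ k' := by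
  rintro rfl
  simpa only [h, reduceCtorEq] using (hA j j' k k s h h' hne).1

/-- The entry of the hybrid array in row `(j, f)` and column `(k, v)` is a tag-star: the vertical
array `A` has a star at `(j, k)`, and `v` is the coordinate of `f` indexed by the block `φ j k`
which replaces that star. -/
def IsTagStar (A : R → C → Option S) (φ : R → C → B) (j : R) (f : B → V) (k : C) (v : V) : Prop :=
  A j k = none ∧ v = f (φ j k)

theorem IsTagStar.eq_none_and_val_sub_lt {n L : ℕ} {A : R → C → Option S} {φ : R → C → B} {j : R}
    {f : B → ZMod n} {k : C} {v : ZMod n} (h : IsTagStar A φ j f k v) (hL : 0 < L) :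
    A j k = none ∧ (v - f (φ j k)).val < L := by
  refine ⟨h.1, ?_⟩
  rwa [h.2, sub_self, ZMod.val_zero]

section Label

variable [Fintype B] [LinearOrder B]

theorem eq_of_eqOn_of_map_sort_compl_eq {I : Finset B} {f f' : B → V} (hI : Set.EqOn f f' I)
    (hcompl : (Iᶜ.sort (· ≤ ·)).map f = (Iᶜ.sort (· ≤ ·)).map f') : f = f' := by
  funext i
  by_cases hi : i ∈ I
  · exact hI hi
  · exact List.map_inj_left.mp hcompl i <| (Finset.mem_sort _).mpr (Finset.mem_compl.mpr hi)

variable [DecidableEq C]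

/-- The second component `e` of the label of a Type II entry in block row `f` and column `(k, v)`,
where `g` assigns blocks to columns and `T` is the set of columns being read (`S_s` in the paper).
The part of `e` read along `T`, with `v` inserted at `k`, is encoded as a function on `T`; the
remaining coordinates of `f` follow as a list in increasing order of their block indices. -/
def typeIILabel (T : Finset C) (g : C → B) (f : B → V) (k : C) (v : V) : (T → V) × List V :=
  (T.restrict (Function.update (f ∘ g) k v), (((T.erase k).image g)ᶜ.sort (· ≤ ·)).map f)

variable {T : Finset C} {g g' : C → B} {f f' : B → V} {k k' : C} {v v' : V}

theorem update_eq_of_typeIILabel_eq (h : typeIILabel T g f k v = typeIILabel T g' f' k' v')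
    {x : C} (hx : x ∈ T) :
    Function.update (f ∘ g) k v x = Function.update (f' ∘ g') k' v' x :=
  congrFun (congrArg Prod.fst h) ⟨x, hx⟩

theorem eq_apply_of_typeIILabel_eq (h : typeIILabel T g f k v = typeIILabel T g' f' k' v')
    (hk : k ∈ T) (hne : k ≠ k') : v = f' (g' k) := by
  simpa only [Function.update_self, Function.update_of_ne hne, Function.comp_apply]
    using update_eq_of_typeIILabel_eq h hk

theorem eq_and_eq_of_typeIILabel_eq (h : typeIILabel T g f k v = typeIILabel T g f' k v')
    (hk : k ∈ T) : f = f' ∧ v = v' := by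
  constructor
  · have hused : Set.EqOn f f' ((T.erase k).image g) := by
      intro i hi
      obtain ⟨x, hx, rfl⟩ := Finset.mem_image.mp hi
      obtain ⟨hxk, hxT⟩ := Finset.mem_erase.mp hx
      simpa only [Function.update_of_ne hxk, Function.comp_apply]
        using update_eq_of_typeIILabel_eq h hxT
    exact eq_of_eqOn_of_map_sort_compl_eq hused (congrArg Prod.snd h)
  · simpa only [Function.update_self] using update_eq_of_typeIILabel_eq h hk

theorem stmt_16_general {A : R → C → Option S} (hA : SatisfiesC3 A) (φ : R → C → B)
    {j j' : R} {s : S} (hs : A j k = some s) (hs' : A j' k' = some s) (hk : k ∈ T) (hk' : k' ∈ T)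
    (hne : ((j, f), (k, v)) ≠ ((j', f'), (k', v')))
    (hlabel : typeIILabel T (φ j) f k v = typeIILabel T (φ j') f' k' v') :
    IsTagStar A φ j f k' v' ∧ IsTagStar A φ j' f' k v := by
  have hcell : (j, k) ≠ (j', k') := by
    rintro ⟨⟩
    obtain ⟨rfl, rfl⟩ := eq_and_eq_of_typeIILabel_eq hlabel hk
    exact hne rfl
  have hcol : k ≠ k' := hA.column_ne hs hs' hcell
  obtain ⟨hstar, hstar'⟩ := hA j j' k k' s hs hs' hcell
  exact ⟨⟨hstar, eq_apply_of_typeIILabel_eq hlabel.symm hk' hcol.symm⟩,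
    ⟨hstar', eq_apply_of_typeIILabel_eq hlabel hk hcol⟩⟩

end Label

end TypeII

/-- Lemma 6 (decodability of Type II filling).  Abstract setting: `Qv` is the vertical
user-delivery array (an `F₁' × K₁` array over `Option (Fin S₁')`, `none` = star) satisfying
Condition C3, and `φ j k₁` tells which of the `t` sub-Partition blocks replaces the star of
`Qv` at `(j,k₁)`.  Rows of the hybrid array `Q` are `(j,f)` with `f : Fin t → ZMod K₂`,
columns are `(k₁,k₂)`; the entry at `((j,f),(k₁,k₂))` is a star iff `Qv j k₁ = none` and
`k₂` lies in the length-`L` cyclic window starting at `f (φ j k₁)`.  A Type II entry at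
`((j,f),(k₁,k₂))` with `Qv j k₁ = some s` carries the label `(s,e)` where `e` consists of
`k₂` inserted (at the position of `k₁` in the sorted column set `S_s` of `s`) into the values
`f (φ j x)` for the other columns `x ∈ S_s`, followed by the values of `f` on the sorted
complement of the used block indices.  If two distinct Type II entries carry the same label
`(s,e)` — expressed below as: equality of the inserted/`S_s` part coordinatewise, and
equality of the trailing sorted-complement lists — then the two crossing entries of `Q` are
stars. -/
theorem stmt_16 (F₁' K₁ S₁' t K₂ L : ℕ) [NeZero K₂] (hL : 0 < L)
    (Qv : Fin F₁' → Fin K₁ → Option (Fin S₁'))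
    (hC3 : ∀ (j j' : Fin F₁') (k k' : Fin K₁) (s : Fin S₁'),
      Qv j k = some s → Qv j' k' = some s → (j, k) ≠ (j', k') →
      Qv j k' = none ∧ Qv j' k = none)
    (φ : Fin F₁' → Fin K₁ → Fin t) :
    ∀ (j j' : Fin F₁') (f f' : Fin t → ZMod K₂) (k₁ k₁' : Fin K₁)
      (k₂ k₂' : ZMod K₂) (s : Fin S₁'),
      Qv j k₁ = some s → Qv j' k₁' = some s →
      ((j, f), (k₁, k₂)) ≠ ((j', f'), (k₁', k₂')) →
      (∀ x : Fin K₁, (∃ j₀, Qv j₀ x = some s) →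
        (if x = k₁ then k₂ else f (φ j x)) = (if x = k₁' then k₂' else f' (φ j' x))) →
      (((Finset.univ \ ((Finset.univ.filter
            (fun x : Fin K₁ => ∃ j₀, Qv j₀ x = some s)).erase k₁).image (φ j)).sort
          (· ≤ ·)).map f
        = ((Finset.univ \ ((Finset.univ.filter
            (fun x : Fin K₁ => ∃ j₀, Qv j₀ x = some s)).erase k₁').image (φ j')).sort
          (· ≤ ·)).map f') →
      (Qv j k₁' = none ∧ (k₂' - f (φ j k₁')).val < L) ∧
      (Qv j' k₁ = none ∧ (k₂ - f' (φ j' k₁)).val < L) := by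
  intro j j' f f' k₁ k₁' k₂ k₂' s hs hs' hne hinserted htail
  let T : Finset (Fin K₁) := {x | ∃ j₀, Qv j₀ x = some s}
  have mem_T (x : Fin K₁) : x ∈ T ↔ ∃ j₀, Qv j₀ x = some s := Finset.mem_filter_univ x
  have hlabel : typeIILabel T (φ j) f k₁ k₂ = typeIILabel T (φ j') f' k₁' k₂' := by
    refine Prod.ext (funext fun x => ?_) htail
    simpa only [typeIILabel, Finset.restrict, Function.update_apply, Function.comp_apply]
      using hinserted x ((mem_T x).mp x.2)
  have htag := stmt_16_general hC3 φ hs hs' ((mem_T k₁).mpr ⟨j, hs⟩) ((mem_T k₁').mpr ⟨j', hs'⟩)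
    hne hlabel
  exact ⟨htag.1.eq_none_and_val_sub_lt hL, htag.2.eq_none_and_val_sub_lt hL⟩
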